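/- arXiv:2007.11297 — 4 statements merged into one kernel-verified Lean document; each statement's English description precedes it below -/
import Mathlib

section
/- Let u be a C¹ strictly convex function on B_R(0) ⊂ ℝ² with u(0) = 0, Du(0) = 0, and let 𝒫 : B_R(0) → ℝ², 𝒫(x₁,x₂) = (∂_{x₁}u(x₁,x₂), x₂). Set m₀ := inf_{∂B_R(0)} u (the infimum of u over the boundary circle, taken as a limit from inside if necessary) and let b := sup_{B_R(0)}|Du|. If δ := min{ m₀/(2b), m₀/(2R) } > 0, then the disc B_δ(0) is contained in the image 𝒫(B_R(0)). -/
open Metric Set MeasureTheory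

noncomputable section

abbrev E2 : Type := EuclideanSpace ℝ (Fin 2)

/-- The point of `ℝ²` with coordinates `(a, b)`. -/
def pt (a b : ℝ) : E2 := (WithLp.equiv 2 (Fin 2 → ℝ)).symm ![a, b]

/-- The standard basis vectors of `ℝ²`. -/
def e2 (i : Fin 2) : E2 := EuclideanSpace.single i 1

/-- The Hessian matrix `D²u(x)`. -/
def hess (u : E2 → ℝ) (x : E2) : Matrix (Fin 2) (Fin 2) ℝ :=
  Matrix.of fun i j => iteratedFDeriv ℝ 2 u x ![e2 i, e2 j]

/-- The determinant of the Hessian, `det D²u(x)`. -/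
def detHess (u : E2 → ℝ) (x : E2) : ℝ := (hess u x).det

/-- The operator norm of a `2 × 2` real matrix. -/
def opNorm2 (M : Matrix (Fin 2) (Fin 2) ℝ) : ℝ :=
  ‖(Matrix.toEuclideanCLM (𝕜 := ℝ) M : E2 →L[ℝ] E2)‖

/-- The partial Legendre transform of `u` in the `e₁`-direction (relative to `B_R(0)`). -/
def pLeg (R : ℝ) (u : E2 → ℝ) (y : E2) : ℝ :=
  sSup ((fun x₁ => x₁ * y 0 - u (pt x₁ (y 1))) '' {x₁ : ℝ | pt x₁ (y 1) ∈ ball (0:E2) R})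

/-- The partial Legendre map `𝒫(x₁,x₂) = (∂_{x₁}u(x), x₂)`. -/
def Pmap (u : E2 → ℝ) (x : E2) : E2 := pt (fderiv ℝ u x (e2 0)) (x 1)

/-- Lemma 2.1: if u is C¹ and strictly convex on B_R(0) with
u(0) = 0, Du(0) = 0, m₀ = inf_{∂B_R} u (u extends continuously to the closed ball),
b bounds |Du| on B_R(0), and δ = min{m₀/(2b), m₀/(2R)} > 0, then
B_δ(0) ⊆ 𝒫(B_R(0)) where 𝒫(x₁,x₂) = (∂_{x₁}u(x), x₂). -/
theorem ball_subset_partialLegendre_image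
    (R b m₀ : ℝ) (hR : 0 < R) (u : E2 → ℝ)
    (hu : ContDiffOn ℝ 1 u (ball (0:E2) R))
    (hconv : StrictConvexOn ℝ (ball (0:E2) R) u)
    (hcont : ContinuousOn u (closedBall (0:E2) R))
    (hu0 : u 0 = 0)
    (hDu0 : gradient u 0 = 0)
    (hm₀ : m₀ = sInf (u '' sphere (0:E2) R))
    (hb : ∀ x ∈ ball (0:E2) R, ‖gradient u x‖ ≤ b)
    (hδ : 0 < min (m₀ / (2 * b)) (m₀ / (2 * R))) :
    ball (0:E2) (min (m₀ / (2 * b)) (m₀ / (2 * R))) ⊆ Pmap u '' ball (0:E2) R := by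
  have hm0 : 0 < m₀ := by
    have h := lt_of_lt_of_le hδ (min_le_right _ _)
    by_contra hc
    exact absurd h (not_lt.mpr (div_nonpos_of_nonpos_of_nonneg (not_lt.mp hc) (by positivity)))
  have hbpos : 0 < b := by
    have h := lt_of_lt_of_le hδ (min_le_left _ _)
    by_contra hc
    exact absurd h (not_lt.mpr (div_nonpos_of_nonneg_of_nonpos hm0.le (by linarith)))
  have hdiff : ∀ x ∈ ball (0:E2) R, DifferentiableAt ℝ u x := fun x hx =>
    (hu.differentiableOn (by norm_num)).differentiableAt (isOpen_ball.mem_nhds hx)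
  have hfd : ∀ x ∈ ball (0:E2) R, ‖fderiv ℝ u x‖ ≤ b := by
    intro x hx
    have h := hb x hx
    rwa [gradient, LinearIsometryEquiv.norm_map] at h
  have hball : ∀ x ∈ ball (0:E2) R, u x ≤ b * ‖x‖ := by
    intro x hx
    have h := (convex_ball (0:E2) R).norm_image_sub_le_of_norm_fderiv_le (𝕜 := ℝ) hdiff hfd
      (mem_ball_self hR) hx
    rw [hu0, sub_zero, sub_zero] at h
    exact (le_abs_self _).trans h
  have hclosed : ∀ x ∈ closedBall (0:E2) R, u x ≤ b * ‖x‖ := by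
    intro x hx
    rw [← closure_ball (0:E2) hR.ne'] at hx hcont
    exact le_on_closure hball hcont (by fun_prop) hx
  have hsph : ∀ x ∈ sphere (0:E2) R, m₀ ≤ u x := by
    intro x hx
    rw [hm₀]
    exact csInf_le ((isCompact_sphere (0:E2) R).image_of_continuousOn
      (hcont.mono sphere_subset_closedBall)).bddBelow (mem_image_of_mem u hx)
  have hnorm : ∀ s t : ℝ, ‖pt s t‖ ^ 2 = s ^ 2 + t ^ 2 := by
    intro s t
    rw [EuclideanSpace.norm_sq_eq]
    simp [pt, Fin.sum_univ_two]
  have hnR : ∀ x : E2, ‖x‖ = R → m₀ ≤ b * R := by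
    intro x hx
    have h1 := hsph x (by simpa using hx)
    have h2 := hclosed x (by simp [hx])
    rw [hx] at h2
    linarith
  have hmbR : m₀ ≤ b * R := by
    refine hnR (pt R 0) ?_
    have := hnorm R 0
    have h3 : ‖pt R 0‖ ^ 2 = R ^ 2 := by rw [this]; ring
    exact (pow_left_inj₀ (norm_nonneg _) hR.le two_ne_zero).mp h3
  intro y hy
  rw [mem_ball_zero_iff] at hy
  obtain ⟨hy1, hy2⟩ := lt_min_iff.mp hy
  rw [lt_div_iff₀ (by positivity)] at hy1 hy2
  set p := y 0 with hp
  set q := y 1 with hq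
  have hpy : |p| ≤ ‖y‖ := by simpa using PiLp.norm_apply_le y 0
  have hqy : |q| ≤ ‖y‖ := by simpa using PiLp.norm_apply_le y 1
  have hyR : ‖y‖ < R := by
    by_contra hc
    have : b * R ≤ b * ‖y‖ := mul_le_mul_of_nonneg_left (not_lt.mp hc) hbpos.le
    nlinarith
  have hqR : q ^ 2 < R ^ 2 := sq_lt_sq' (by linarith [neg_abs_le q]) (by linarith [le_abs_self q])
  set T := Real.sqrt (R ^ 2 - q ^ 2) with hT
  have hT2 : T ^ 2 = R ^ 2 - q ^ 2 := Real.sq_sqrt (by linarith)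
  have hTpos : 0 < T := Real.sqrt_pos.mpr (by linarith)
  have hTR : T ≤ R := by nlinarith [sq_nonneg q]
  have hpt : ∀ t : ℝ, pt t q = t • e2 0 + pt 0 q := by
    intro t
    ext i
    fin_cases i <;> simp [pt, e2]
  have hptc : Continuous (fun t : ℝ => pt t q) := by
    rw [funext hpt]; fun_prop
  have hin : ∀ t ∈ Ioo (-T) T, pt t q ∈ ball (0:E2) R := by
    intro t ht
    rw [mem_ball_zero_iff]
    have h1 : t ^ 2 < T ^ 2 := sq_lt_sq' ht.1 ht.2
    exact lt_of_pow_lt_pow_left₀ 2 hR.le (by rw [hnorm]; linarith)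
  have hinc : ∀ t ∈ Icc (-T) T, pt t q ∈ closedBall (0:E2) R := by
    intro t ht
    rw [mem_closedBall_zero_iff]
    have h1 : t ^ 2 ≤ T ^ 2 := sq_le_sq' ht.1 ht.2
    exact le_of_sq_le_sq (by rw [hnorm]; linarith) hR.le
  have hend : ∀ t : ℝ, t ^ 2 = T ^ 2 → m₀ ≤ u (pt t q) := by
    intro t ht
    apply hsph
    rw [mem_sphere_zero_iff_norm]
    exact (pow_left_inj₀ (norm_nonneg _) hR.le two_ne_zero).mp (by rw [hnorm]; linarith)
  have hgc : ContinuousOn (fun t : ℝ => u (pt t q) - t * p) (Icc (-T) T) :=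
    (hcont.comp hptc.continuousOn hinc).sub (by fun_prop)
  obtain ⟨t, ht, hmin⟩ := isCompact_Icc.exists_isMinOn ⟨0, by constructor <;> linarith⟩ hgc
  have hg0 : u (pt t q) - t * p < m₀ / 2 := by
    have h1 : u (pt t q) - t * p ≤ u (pt 0 q) - 0 * p :=
      hmin (show (0:ℝ) ∈ Icc (-T) T by constructor <;> linarith)
    have h2 := hball _ (hin 0 ⟨by linarith, hTpos⟩)
    have h3 : ‖pt 0 q‖ = |q| := by
      refine (pow_left_inj₀ (norm_nonneg _) (abs_nonneg _) two_ne_zero).mp ?_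
      rw [hnorm, sq_abs]; ring
    rw [h3] at h2
    have := mul_le_mul_of_nonneg_left hqy hbpos.le
    linarith
  have hpT : |p| * T < m₀ / 2 := by
    have h1 : |p| * T ≤ ‖y‖ * R := mul_le_mul hpy hTR hTpos.le (norm_nonneg _)
    linarith
  have hne : ∀ s : ℝ, s ^ 2 = T ^ 2 → t ≠ s := by
    rintro s hs rfl
    have h1 := hend t hs
    have h2 : |t| = T := by rw [← abs_of_pos hTpos]; exact sq_eq_sq_iff_abs_eq_abs _ _ |>.mp hs
    have h3 : t * p ≤ |p| * T := by rw [← h2, mul_comm, ← abs_mul]; exact le_abs_self _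
    linarith
  have htI : t ∈ Ioo (-T) T :=
    ⟨lt_of_le_of_ne ht.1 (hne (-T) (by ring)).symm, lt_of_le_of_ne ht.2 (hne T rfl)⟩
  have hd : HasDerivAt (fun t : ℝ => u (pt t q) - t * p)
      (fderiv ℝ u (pt t q) (e2 0) - 1 * p) t := by
    have h1 : HasDerivAt (fun t : ℝ => pt t q) (e2 0) t := by
      rw [funext hpt]
      simpa using ((hasDerivAt_id t).smul_const (e2 0)).add_const (pt 0 q)
    exact ((hdiff _ (hin t htI)).hasFDerivAt.comp_hasDerivAt t h1).sub
      ((hasDerivAt_id t).mul_const p)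
  have hz := (hmin.isLocalMin (Icc_mem_nhds htI.1 htI.2)).hasDerivAt_eq_zero hd
  refine ⟨pt t q, hin t htI, ?_⟩
  have hz' : fderiv ℝ u (pt t q) (e2 0) = p := by linarith
  rw [Pmap, hz']
  ext i
  fin_cases i <;> simp [pt, hp, hq]
end
end

section
/- Let u be a C² strictly convex function on B_R(0) ⊂ ℝ² with ∂_{x₁x₁}u > 0, solving det D²u = f with f > 0, and let u* be its partial Legendre transform in the e₁-direction with associated map 𝒫(x₁,x₂) = (∂_{x₁}u(x₁,x₂), x₂). Then u* is twice differentiable on the open set 𝒫(B_R(0)) and for every x ∈ B_R(0), at the point y = 𝒫(x): ∂_{y₁y₁}u*(y) = 1/∂_{x₁x₁}u(x), ∂_{y₁y₂}u*(y) = −∂_{x₁x₂}u(x)/∂_{x₁x₁}u(x), and ∂_{y₂y₂}u*(y) = −f(x)/∂_{x₁x₁}u(x) = −det D²u(x)/∂_{x₁x₁}u(x). -/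
open Metric Set MeasureTheory

noncomputable section

lemma pt_zero (a b : ℝ) : pt a b 0 = a := by simp [pt]
lemma pt_one (a b : ℝ) : pt a b 1 = b := by simp [pt]
lemma pt_eta (x : E2) : pt (x 0) (x 1) = x := by
  ext i; fin_cases i <;> simp [pt]
lemma pt_eq (a b : ℝ) : pt a b = a • e2 0 + b • e2 1 := by
  ext i; fin_cases i <;> simp [pt, e2]
lemma e2_00 : e2 0 0 = 1 := by simp [e2]
lemma e2_01 : e2 0 1 = 0 := by simp [e2]
lemma e2_10 : e2 1 0 = 0 := by simp [e2]
lemma e2_11 : e2 1 1 = 1 := by simp [e2]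
lemma E2_decomp (k : E2) : k = k 0 • e2 0 + k 1 • e2 1 := by
  rw [← pt_eq, pt_eta]

lemma hess_apply (u : E2 → ℝ) (x : E2) (i j : Fin 2) :
    hess u x i j = fderiv ℝ (fderiv ℝ u) x (e2 i) (e2 j) := by
  simp [hess, iteratedFDeriv_two_apply]

lemma grad_ineq {s : Set E2} {u : E2 → ℝ} (hc : ConvexOn ℝ s u) {x z : E2} (hx : x ∈ s) (hz : z ∈ s)
    {L : E2 →L[ℝ] ℝ} (hL : HasFDerivAt u L x) : u x + L (z - x) ≤ u z := by
  have h1 : HasDerivAt (fun t : ℝ => u (x + t • (z - x))) (L (z - x)) 0 := by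
    have h2 : HasDerivAt (fun t : ℝ => x + t • (z - x)) ((1:ℝ) • (z - x)) 0 :=
      ((hasDerivAt_id (0:ℝ)).smul_const (z - x)).const_add x
    have h3 : HasFDerivAt u L (x + (0:ℝ) • (z - x)) := by simpa using hL
    have h4 := h3.comp_hasDerivAt (0:ℝ) h2
    rw [one_smul] at h4
    exact h4
  have h4 := h1.tendsto_slope_zero_right
  have h5 : ∀ᶠ t : ℝ in nhdsWithin 0 (Ioi 0),
      t⁻¹ • (u (x + (0 + t) • (z - x)) - u (x + (0:ℝ) • (z - x))) ≤ u z - u x := by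
    filter_upwards [Ioo_mem_nhdsGT (zero_lt_one' ℝ)] with t ht
    have h6 := hc.2 hx hz (show (0:ℝ) ≤ 1 - t by linarith [ht.2]) ht.1.le (by ring)
    have h7 : (1 - t) • x + t • z = x + (0 + t) • (z - x) := by module
    rw [h7] at h6
    simp only [smul_eq_mul] at h6 ⊢
    rw [zero_smul, add_zero, inv_mul_le_iff₀ ht.1]
    linarith
  have := le_of_tendsto h4 h5
  linarith

section
variable {R : ℝ} {u : E2 → ℝ} (hu : ContDiffOn ℝ 2 u (ball (0:E2) R))
  (hconv : StrictConvexOn ℝ (ball (0:E2) R) u)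
  (h11 : ∀ x ∈ ball (0:E2) R, 0 < hess u x 0 0) {x : E2} (hx : x ∈ ball (0:E2) R)

lemma cda (hu : ContDiffOn ℝ 2 u (ball (0:E2) R)) (hx : x ∈ ball (0:E2) R) :
    ContDiffAt ℝ 2 u x := hu.contDiffAt (isOpen_ball.mem_nhds hx)

lemma hasFD (hu : ContDiffOn ℝ 2 u (ball (0:E2) R)) (hx : x ∈ ball (0:E2) R) :
    HasFDerivAt u (fderiv ℝ u x) x :=
  ((cda hu hx).differentiableAt (by norm_num)).hasFDerivAt

lemma hasStrictFD2 (hu : ContDiffOn ℝ 2 u (ball (0:E2) R)) (hx : x ∈ ball (0:E2) R) :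
    HasStrictFDerivAt (fderiv ℝ u) (fderiv ℝ (fderiv ℝ u) x) x := by
  have h : ContDiffAt ℝ 1 (fderiv ℝ u) x := (cda hu hx).fderiv_right (by norm_num)
  exact h.hasStrictFDerivAt (by norm_num)

lemma pLeg_Pmap (hu : ContDiffOn ℝ 2 u (ball (0:E2) R))
    (hconv : StrictConvexOn ℝ (ball (0:E2) R) u) (hx : x ∈ ball (0:E2) R) :
    pLeg R u (Pmap u x) = x 0 * Pmap u x 0 - u x := by
  unfold pLeg
  apply IsGreatest.csSup_eq
  have h1 : Pmap u x 1 = x 1 := pt_one _ _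
  have h0 : Pmap u x 0 = fderiv ℝ u x (e2 0) := pt_zero _ _
  rw [h1]
  constructor
  · exact ⟨x 0, by simpa [pt_eta] using hx, by simp [pt_eta]⟩
  · rintro _ ⟨t, ht, rfl⟩
    have := grad_ineq hconv.convexOn hx ht (hasFD hu hx)
    have h2 : pt t (x 1) - x = (t - x 0) • e2 0 := by
      nth_rewrite 2 [E2_decomp x]
      rw [pt_eq]; module
    rw [h2, map_smul, smul_eq_mul] at this
    dsimp only
    rw [h0]
    linarith

lemma exists_inv (hu : ContDiffOn ℝ 2 u (ball (0:E2) R))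
    (h11 : ∀ x ∈ ball (0:E2) R, 0 < hess u x 0 0) (hx : x ∈ ball (0:E2) R) :
    ∃ (g : E2 → E2) (G : E2 →L[ℝ] E2), g (Pmap u x) = x ∧ HasFDerivAt g G (Pmap u x) ∧
      (∀ᶠ z in nhds (Pmap u x), Pmap u (g z) = z ∧ g z ∈ ball (0:E2) R) ∧
      (∀ h, (G h) 1 = h 1) ∧
      (∀ h, fderiv ℝ (fderiv ℝ u) x (G h) (e2 0) = h 0) := by
  set H := fderiv ℝ (fderiv ℝ u) x with hH
  let A : E2 →L[ℝ] E2 := (((ContinuousLinearMap.apply ℝ ℝ (e2 0)).comp H).smulRight (e2 0)) +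
    (EuclideanSpace.proj (1 : Fin 2) : E2 →L[ℝ] ℝ).smulRight (e2 1)
  have hA : ∀ k, A k = (H k (e2 0)) • e2 0 + k 1 • e2 1 := fun k => by simp [A]
  have hA0 : ∀ k, A k 0 = H k (e2 0) := fun k => by simp [hA, e2]
  have hA1 : ∀ k, A k 1 = k 1 := fun k => by simp [hA, e2]
  have hP : HasStrictFDerivAt (Pmap u) A x := by
    have e : Pmap u = fun x => (fderiv ℝ u x (e2 0)) • e2 0 +
        (EuclideanSpace.proj (1 : Fin 2) : E2 →L[ℝ] ℝ) x • e2 1 := by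
      funext x; simp [Pmap, pt_eq]
    rw [e]
    have a1 : HasStrictFDerivAt (fun x => fderiv ℝ u x (e2 0))
        ((ContinuousLinearMap.apply ℝ ℝ (e2 0)).comp H) x :=
      (ContinuousLinearMap.apply ℝ ℝ (e2 0)).hasStrictFDerivAt.comp x (hasStrictFD2 hu hx)
    exact (a1.smul_const (e2 0)).add
      ((EuclideanSpace.proj (1 : Fin 2) : E2 →L[ℝ] ℝ).hasStrictFDerivAt.smul_const (e2 1))
  have inj : Function.Injective (A : E2 →ₗ[ℝ] E2) := by
    rw [injective_iff_map_eq_zero]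
    intro k hk
    have hk' : A k = 0 := hk
    have k1 : k 1 = 0 := by rw [← hA1, hk']; rfl
    have k0 : H k (e2 0) = 0 := by rw [← hA0, hk']; rfl
    have p := h11 x hx
    rw [hess_apply] at p
    rw [E2_decomp k, k1] at k0
    simp only [zero_smul, add_zero, map_smul, smul_apply, smul_eq_mul] at k0
    have k00 : k 0 = 0 := by
      rcases mul_eq_zero.1 k0 with h | h
      · exact h
      · exact absurd h p.ne'
    rw [E2_decomp k, k00, k1]; simp
  let B : E2 ≃L[ℝ] E2 := (LinearEquiv.ofInjectiveEndo (A : E2 →ₗ[ℝ] E2) inj).toContinuousLinearEquiv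
  have hBA : ∀ k, B k = A k := fun k => rfl
  have hP' : HasStrictFDerivAt (Pmap u) (B : E2 →L[ℝ] E2) x := by
    have : (B : E2 →L[ℝ] E2) = A := by ext1 k; exact hBA k
    rw [this]; exact hP
  have hg := hP'.to_localInverse
  have hgx : hP'.localInverse (Pmap u) B x (Pmap u x) = x := hP'.localInverse_apply_image
  refine ⟨hP'.localInverse (Pmap u) B x, (B.symm : E2 →L[ℝ] E2), hgx, hg.hasFDerivAt, ?_, ?_, ?_⟩
  · refine hP'.eventually_right_inverse.and ?_
    apply hg.hasFDerivAt.continuousAt.eventually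
    rw [hgx]
    exact isOpen_ball.mem_nhds hx
  · intro h
    rw [← hA1, ← hBA]; simp
  · intro h
    rw [← hA0, ← hBA]; simp

def Lx (u : E2 → ℝ) (x : E2) : E2 →L[ℝ] ℝ :=
  (EuclideanSpace.proj (0 : Fin 2) : E2 →L[ℝ] ℝ) x • (EuclideanSpace.proj (0 : Fin 2) : E2 →L[ℝ] ℝ)
    - (fderiv ℝ u x (e2 1)) • (EuclideanSpace.proj (1 : Fin 2) : E2 →L[ℝ] ℝ)

lemma pLeg_hasFDerivAt (hu : ContDiffOn ℝ 2 u (ball (0:E2) R))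
    (hconv : StrictConvexOn ℝ (ball (0:E2) R) u)
    (h11 : ∀ x ∈ ball (0:E2) R, 0 < hess u x 0 0) (hx : x ∈ ball (0:E2) R) :
    HasFDerivAt (pLeg R u) (Lx u x) (Pmap u x) := by
  obtain ⟨g, G, hgx, hg, hev, hG1, hG0⟩ := exists_inv hu h11 hx
  have e : pLeg R u =ᶠ[nhds (Pmap u x)] fun z =>
      (EuclideanSpace.proj (0 : Fin 2) : E2 →L[ℝ] ℝ) (g z) *
        (EuclideanSpace.proj (0 : Fin 2) : E2 →L[ℝ] ℝ) z - u (g z) := by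
    filter_upwards [hev] with z hz
    have := pLeg_Pmap hu hconv hz.2
    rw [hz.1] at this
    simpa using this
  have hug : HasFDerivAt u (fderiv ℝ u x) (g (Pmap u x)) := by rw [hgx]; exact hasFD hu hx
  have d := ((((EuclideanSpace.proj (0 : Fin 2) : E2 →L[ℝ] ℝ).hasFDerivAt.comp _ hg).mul
    ((EuclideanSpace.proj (0 : Fin 2) : E2 →L[ℝ] ℝ).hasFDerivAt (x := Pmap u x))).sub
    (hug.comp _ hg))
  refine HasFDerivAt.congr_of_eventuallyEq ?_ e
  refine HasFDerivAt.congr_fderiv d ?_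
  ext1 h
  have h0 : Pmap u x 0 = fderiv ℝ u x (e2 0) := pt_zero _ _
  have h2 : fderiv ℝ u x (G h) = (G h) 0 * fderiv ℝ u x (e2 0) + h 1 * fderiv ℝ u x (e2 1) := by
    nth_rewrite 1 [E2_decomp (G h)]
    rw [map_add, map_smul, map_smul, hG1]; rfl
  simp [Lx, hgx, h0, h2]
  ring

lemma main_aux (hu : ContDiffOn ℝ 2 u (ball (0:E2) R))
    (hconv : StrictConvexOn ℝ (ball (0:E2) R) u)
    (h11 : ∀ x ∈ ball (0:E2) R, 0 < hess u x 0 0) (hx : x ∈ ball (0:E2) R) :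
    DifferentiableAt ℝ (fun z => fderiv ℝ (pLeg R u) z) (Pmap u x) ∧
    hess (pLeg R u) (Pmap u x) 0 0 = 1 / hess u x 0 0 ∧
      hess (pLeg R u) (Pmap u x) 0 1 = -(hess u x 0 1) / hess u x 0 0 ∧
      hess (pLeg R u) (Pmap u x) 1 1 = -(detHess u x) / hess u x 0 0 := by
  obtain ⟨g, G, hgx, hg, hev, hG1, hG0⟩ := exists_inv hu h11 hx
  have p := h11 x hx
  set H := fderiv ℝ (fderiv ℝ u) x with hH
  have e : fderiv ℝ (pLeg R u) =ᶠ[nhds (Pmap u x)] fun z => Lx u (g z) := by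
    filter_upwards [hev] with z hz
    have := (pLeg_hasFDerivAt hu hconv h11 hz.2).fderiv
    rwa [hz.1] at this
  have a1 : HasFDerivAt (fun x => fderiv ℝ u x (e2 1))
      ((ContinuousLinearMap.apply ℝ ℝ (e2 1)).comp H) (g (Pmap u x)) := by
    rw [hgx]
    exact (ContinuousLinearMap.apply ℝ ℝ (e2 1)).hasFDerivAt.comp x (hasStrictFD2 hu hx).hasFDerivAt
  have d := ((((EuclideanSpace.proj (0 : Fin 2) : E2 →L[ℝ] ℝ).hasFDerivAt.comp _ hg).smul_const
      (EuclideanSpace.proj (0 : Fin 2) : E2 →L[ℝ] ℝ)).sub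
    ((a1.comp _ hg).smul_const (EuclideanSpace.proj (1 : Fin 2) : E2 →L[ℝ] ℝ)))
  have d' := HasFDerivAt.congr_of_eventuallyEq d e
  have key : ∀ i j, hess (pLeg R u) (Pmap u x) i j =
      (G (e2 i)) 0 * e2 j 0 - H (G (e2 i)) (e2 1) * e2 j 1 := by
    intro i j
    rw [hess_apply, d'.fderiv]
    simp
  have dec : ∀ h : E2, ∀ j, H (G h) (e2 j) = (G h) 0 * hess u x 0 j + h 1 * hess u x 1 j := by
    intro h j
    nth_rewrite 1 [E2_decomp (G h)]
    rw [hG1, hess_apply, hess_apply]; simp [← hH]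
  have q0 := hG0 (e2 0)
  have q1 := hG0 (e2 1)
  rw [dec] at q0 q1
  simp only [e2_00, e2_01, e2_10, e2_11] at q0 q1
  have r0 : (G (e2 0)) 0 = 1 / hess u x 0 0 := by field_simp; linarith
  have r1 : (G (e2 1)) 0 = - hess u x 1 0 / hess u x 0 0 := by field_simp; linarith
  refine ⟨d'.differentiableAt, ?_, ?_, ?_⟩
  · rw [key, dec, r0]; simp [e2_00, e2_01]
  · rw [key, dec, r0]; simp only [e2_10, e2_01, e2_11]; ring
  · rw [key, dec, r1, detHess, Matrix.det_fin_two]; simp only [e2_10, e2_11]; field_simp; ring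
end

/-- for u C² strictly convex on B_R(0) with ∂_{x₁x₁}u > 0 and
det D²u = f > 0, the partial Legendre transform u* is twice differentiable on
𝒫(B_R(0)) and at y = 𝒫(x): ∂_{y₁y₁}u* = 1/∂_{x₁x₁}u, ∂_{y₁y₂}u* = −∂_{x₁x₂}u/∂_{x₁x₁}u,
∂_{y₂y₂}u* = −f/∂_{x₁x₁}u = −det D²u/∂_{x₁x₁}u. -/
theorem partialLegendre_second_derivatives
    (R : ℝ) (hR : 0 < R) (u f : E2 → ℝ)
    (hu : ContDiffOn ℝ 2 u (ball (0:E2) R))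
    (hconv : StrictConvexOn ℝ (ball (0:E2) R) u)
    (h11 : ∀ x ∈ ball (0:E2) R, 0 < hess u x 0 0)
    (hMA : ∀ x ∈ ball (0:E2) R, detHess u x = f x)
    (hfpos : ∀ x ∈ ball (0:E2) R, 0 < f x) :
    (∀ y ∈ Pmap u '' ball (0:E2) R,
      DifferentiableAt ℝ (pLeg R u) y ∧
      DifferentiableAt ℝ (fun z => fderiv ℝ (pLeg R u) z) y) ∧
    ∀ x ∈ ball (0:E2) R,
      hess (pLeg R u) (Pmap u x) 0 0 = 1 / hess u x 0 0 ∧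
      hess (pLeg R u) (Pmap u x) 0 1 = -(hess u x 0 1) / hess u x 0 0 ∧
      hess (pLeg R u) (Pmap u x) 1 1 = -(f x) / hess u x 0 0 ∧
      hess (pLeg R u) (Pmap u x) 1 1 = -(detHess u x) / hess u x 0 0 := by
  constructor
  · rintro _ ⟨x, hx, rfl⟩
    exact ⟨(pLeg_hasFDerivAt hu hconv h11 hx).differentiableAt, (main_aux hu hconv h11 hx).1⟩
  · intro x hx
    obtain ⟨-, a, b, c⟩ := main_aux hu hconv h11 hx
    exact ⟨a, b, by rw [c, hMA x hx], c⟩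
end
end

section
/- Let u be a C¹ convex function on a neighborhood of the closed disc B̄_t(0) ⊂ ℝ² with u(0) = 0 and u ≥ 0, and let b := sup_{B̄_t(0)}|Du|. Suppose m > 0 and τ ∈ (0, t] are such that u(x₁, 0) ≤ m for all x₁ ∈ (−τ, t). Then for every point x = (x₁, x₂) with t/4 < x₁ < 3t/4 and |x₂| < t/4, one has |∂_{x₁}u(x₁,x₂)| ≤ (8/t)·( m + 2b|x₂| ). -/
open Metric Set MeasureTheory

noncomputable section

lemma aux_tangent (S : Set E2) (u : E2 → ℝ) (hc : ConvexOn ℝ S u) (x y : E2)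
    (hx : x ∈ S) (hy : y ∈ S) (hd : DifferentiableAt ℝ u x) :
    fderiv ℝ u x (y - x) ≤ u y - u x := by
  have h1 := hc.comp_affineMap (AffineMap.lineMap x y : ℝ →ᵃ[ℝ] E2)
  have h2 : HasDerivAt (AffineMap.lineMap x y : ℝ → E2) (y - x) 0 := AffineMap.hasDerivAt_lineMap
  have h3 : HasDerivAt (u ∘ (AffineMap.lineMap x y : ℝ → E2)) (fderiv ℝ u x (y - x)) 0 := by
    apply HasFDerivAt.comp_hasDerivAt 0 _ h2
    simpa using hd.hasFDerivAt
  have h4 := h1.le_slope_of_hasDerivAt (x := 0) (y := 1) (by simpa using hx) (by simpa using hy)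
    one_pos h3
  simpa [slope_def_field] using h4

lemma aux_norm (a c t : ℝ) (ht : 0 ≤ t) (h : a ^ 2 + c ^ 2 ≤ t ^ 2) :
    pt a c ∈ closedBall (0 : E2) t := by
  rw [mem_closedBall_zero_iff, EuclideanSpace.norm_eq]
  apply Real.sqrt_le_iff.2 ⟨ht, ?_⟩
  simpa [pt, Fin.sum_univ_two] using h

/-- if u is C¹ on a neighborhood of B̄_t(0), convex on B̄_t(0),
with u(0) = 0, u ≥ 0, |Du| ≤ b on B̄_t(0), and u(x₁, 0) ≤ m for all x₁ ∈ (−τ, t)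
for some m > 0 and τ ∈ (0, t], then for every (x₁,x₂) with t/4 < x₁ < 3t/4 and
|x₂| < t/4 one has |∂_{x₁}u(x₁,x₂)| ≤ (8/t)(m + 2b|x₂|). -/
theorem partial_derivative_bound_on_strip
    (t b m τ : ℝ) (ht : 0 < t) (hm : 0 < m) (hτ₀ : 0 < τ) (hτt : τ ≤ t)
    (u : E2 → ℝ) (U : Set E2) (hU : IsOpen U) (hUt : closedBall (0:E2) t ⊆ U)
    (hu : ContDiffOn ℝ 1 u U)
    (hconv : ConvexOn ℝ (closedBall (0:E2) t) u)
    (hu0 : u 0 = 0)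
    (hpos : ∀ x ∈ closedBall (0:E2) t, 0 ≤ u x)
    (hb : ∀ x ∈ closedBall (0:E2) t, ‖gradient u x‖ ≤ b)
    (haxis : ∀ x₁ : ℝ, x₁ ∈ Set.Ioo (-τ) t → u (pt x₁ 0) ≤ m) :
    ∀ x₁ x₂ : ℝ, t / 4 < x₁ → x₁ < 3 * t / 4 → |x₂| < t / 4 →
      |fderiv ℝ u (pt x₁ x₂) (e2 0)| ≤ 8 / t * (m + 2 * b * |x₂|) := by
  intro x₁ x₂ h1 h2 h3
  have hdiff : ∀ x ∈ closedBall (0:E2) t, DifferentiableAt ℝ u x := fun x hx =>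
    (hu.differentiableOn (by norm_num)).differentiableAt (hU.mem_nhds (hUt hx))
  have hb' : ∀ x ∈ closedBall (0:E2) t, ‖fderiv ℝ u x‖ ≤ b := by
    intro x hx
    have := hb x hx
    rwa [gradient, LinearIsometryEquiv.norm_map] at this
  have hb0 : 0 ≤ b := (norm_nonneg _).trans (hb' 0 (by simp [ht.le]))
  have hx2 : x₂ ^ 2 ≤ (t / 4) ^ 2 := sq_le_sq' (by linarith [neg_abs_le x₂]) (by linarith [le_abs_self x₂])
  have hmem : ∀ a c : ℝ, 0 ≤ a → a ≤ 7 * t / 8 → c ^ 2 ≤ (t / 4) ^ 2 →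
      pt a c ∈ closedBall (0:E2) t := by
    intro a c ha ha' hc
    apply aux_norm _ _ _ ht.le
    nlinarith [mul_self_le_mul_self ha ha']
  have hup : ∀ a : ℝ, 0 ≤ a → a ≤ 7 * t / 8 → u (pt a x₂) ≤ m + b * |x₂| := by
    intro a ha ha'
    have hl := (convex_closedBall (0:E2) t).norm_image_sub_le_of_norm_fderiv_le (𝕜 := ℝ) hdiff hb'
      (hmem a 0 ha ha' (by nlinarith [sq_nonneg (t / 4)])) (hmem a x₂ ha ha' hx2)
    have hn : ‖pt a x₂ - pt a 0‖ = |x₂| := by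
      rw [EuclideanSpace.norm_eq]
      simp [pt, Fin.sum_univ_two, Real.sqrt_sq_eq_abs]
    rw [hn, Real.norm_eq_abs] at hl
    have := haxis a ⟨by linarith, by linarith⟩
    linarith [le_abs_self (u (pt a x₂) - u (pt a 0))]
  have hp := hmem x₁ x₂ (by linarith) (by linarith) hx2
  have hp0 := hpos _ hp
  have key : ∀ s : ℝ, 0 ≤ x₁ + s → x₁ + s ≤ 7 * t / 8 →
      s * fderiv ℝ u (pt x₁ x₂) (e2 0) ≤ m + b * |x₂| := by
    intro s hs hs'
    have h := aux_tangent _ u hconv _ _ hp (hmem (x₁ + s) x₂ hs hs' hx2) (hdiff _ hp)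
    have he : pt (x₁ + s) x₂ - pt x₁ x₂ = s • e2 0 := by
      ext i
      fin_cases i <;> simp [pt, e2]
    rw [he, map_smul, smul_eq_mul] at h
    linarith [hup _ hs hs']
  have k1 := key (t / 8) (by linarith) (by linarith)
  have k2 := key (-(t / 8)) (by linarith) (by linarith)
  have hbx : 0 ≤ b * |x₂| := by positivity
  have e : 8 / t * (m + 2 * b * |x₂|) = (m + 2 * b * |x₂|) / (t / 8) := by
    field_simp
  rw [e, le_div_iff₀ (by positivity)]
  rcases abs_cases (fderiv ℝ u (pt x₁ x₂) (e2 0)) with ⟨h, _⟩ | ⟨h, _⟩ <;> rw [h] <;> linarith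
end
end

section
/- Let u be a C² convex function on a neighborhood of the closed disc B̄_t(0) ⊂ ℝ² with u(0) = 0, u ≥ 0, and det D²u ≥ C₀⁻¹ > 0, and let b := sup_{B̄_t(0)}|Du|. Suppose m > 0 and τ ∈ (0, t] are such that u(x₁, 0) ≤ m for all x₁ ∈ (−τ, t). Then for every x₂ with |x₂| < t/4, ∫_{t/4}^{3t/4} ∂_{x₂x₂}u(x₁, x₂) dx₁ ≥ (t³ / (64·C₀)) · ( m + 2b|x₂| )⁻¹. -/
open Metric Set MeasureTheory

noncomputable section

/-- if u is C² on a neighborhood of B̄_t(0), convex on B̄_t(0),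
with u(0) = 0, u ≥ 0, det D²u ≥ C₀⁻¹ > 0, |Du| ≤ b on B̄_t(0), and u(x₁,0) ≤ m
for all x₁ ∈ (−τ, t) with m > 0, τ ∈ (0,t], then for every |x₂| < t/4,
∫_{t/4}^{3t/4} ∂_{x₂x₂}u(x₁,x₂) dx₁ ≥ (t³/(64 C₀)) (m + 2b|x₂|)⁻¹. -/
theorem second_derivative_integral_lower_bound
    (t C₀ b m τ : ℝ) (ht : 0 < t) (hC₀ : 0 < C₀) (hm : 0 < m)
    (hτ₀ : 0 < τ) (hτt : τ ≤ t)
    (u : E2 → ℝ) (U : Set E2) (hU : IsOpen U) (hUt : closedBall (0:E2) t ⊆ U)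
    (hu : ContDiffOn ℝ 2 u U)
    (hconv : ConvexOn ℝ (closedBall (0:E2) t) u)
    (hu0 : u 0 = 0)
    (hpos : ∀ x ∈ closedBall (0:E2) t, 0 ≤ u x)
    (hdet : ∀ x ∈ closedBall (0:E2) t, C₀⁻¹ ≤ detHess u x)
    (hb : ∀ x ∈ closedBall (0:E2) t, ‖gradient u x‖ ≤ b)
    (haxis : ∀ x₁ : ℝ, x₁ ∈ Set.Ioo (-τ) t → u (pt x₁ 0) ≤ m) :
    ∀ x₂ : ℝ, |x₂| < t / 4 →
      t ^ 3 / (64 * C₀) * (m + 2 * b * |x₂|)⁻¹ ≤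
        ∫ x₁ in (t / 4)..(3 * t / 4), hess u (pt x₁ x₂) 1 1 := by
  intro x₂ hx₂
  have hx2sq : x₂ ^ 2 ≤ (t/4)^2 := by
    rw [← sq_abs x₂]
    exact pow_le_pow_left₀ (abs_nonneg _) hx₂.le 2
  have hnorm : ∀ a c : ℝ, a ^ 2 + c ^ 2 ≤ t ^ 2 → pt a c ∈ closedBall (0:E2) t := by
    intro a c h
    rw [mem_closedBall_zero_iff, EuclideanSpace.norm_eq, Real.sqrt_le_left ht.le]
    simpa [pt, Fin.sum_univ_two] using h
  have hmem : ∀ s ∈ Icc (0:ℝ) (15*t/16), pt s x₂ ∈ closedBall (0:E2) t := by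
    intro s hs
    apply hnorm
    have : s^2 ≤ (15*t/16)^2 := pow_le_pow_left₀ hs.1 hs.2 2
    nlinarith [sq_nonneg t]
  have hmem0 : ∀ s ∈ Icc (0:ℝ) (15*t/16), pt s 0 ∈ closedBall (0:E2) t := by
    intro s hs
    apply hnorm
    have : s^2 ≤ (15*t/16)^2 := pow_le_pow_left₀ hs.1 hs.2 2
    nlinarith [sq_nonneg t]
  have hC2 : ∀ x ∈ closedBall (0:E2) t, ContDiffAt ℝ 2 u x := fun x hx =>
    hu.contDiffAt (hU.mem_nhds (hUt hx))
  have hd1 : ∀ x ∈ closedBall (0:E2) t, DifferentiableAt ℝ u x := fun x hx =>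
    (hC2 x hx).differentiableAt (by norm_num)
  have hC1 : ∀ x ∈ closedBall (0:E2) t, ContDiffAt ℝ 1 (fderiv ℝ u) x := fun x hx =>
    (hC2 x hx).fderiv_right (by norm_num)
  have hC0 : ∀ x ∈ closedBall (0:E2) t, ContinuousAt (fderiv ℝ (fderiv ℝ u)) x := fun x hx =>
    ((hC1 x hx).fderiv_right (m := 0) (by norm_num)).continuousAt
  have hpt : ∀ s c : ℝ, pt s c = s • e2 0 + c • e2 1 := by
    intro s c
    ext i
    fin_cases i <;> simp [pt, e2]
  have hline : ∀ s : ℝ, HasDerivAt (fun s => pt s x₂) (e2 0) s := by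
    intro s
    have : (fun s => pt s x₂) = fun s => s • e2 0 + x₂ • e2 1 := funext fun s => hpt s x₂
    rw [this]
    simpa using ((hasDerivAt_id s).smul_const (e2 0)).add_const (x₂ • e2 1)
  have hhess : ∀ x i j, hess u x i j = fderiv ℝ (fderiv ℝ u) x (e2 i) (e2 j) := by
    intro x i j
    simp [hess, iteratedFDeriv_two_apply]
  set f : ℝ → ℝ := fun s => u (pt s x₂) with hf
  set g : ℝ → ℝ := fun s => fderiv ℝ u (pt s x₂) (e2 0) with hg
  have hf' : ∀ s ∈ Icc (0:ℝ) (15*t/16), HasDerivAt f (g s) s := fun s hs =>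
    (hd1 _ (hmem s hs)).hasFDerivAt.comp_hasDerivAt s (hline s)
  have hg' : ∀ s ∈ Icc (0:ℝ) (15*t/16), HasDerivAt g (hess u (pt s x₂) 0 0) s := by
    intro s hs
    rw [hhess]
    have h1 := ((hC1 _ (hmem s hs)).differentiableAt (by norm_num)).hasFDerivAt.comp_hasDerivAt s
      (hline s)
    simpa using h1.clm_apply (hasDerivAt_const s (e2 0))
  have hfc : ConvexOn ℝ (Icc (0:ℝ) (15*t/16)) f := by
    refine ⟨convex_Icc _ _, ?_⟩
    intro a ha c hc p q hp hq hpq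
    have := hconv.2 (hmem a ha) (hmem c hc) hp hq hpq
    have e : p • pt a x₂ + q • pt c x₂ = pt (p • a + q • c) x₂ := by
      have : x₂ = p * x₂ + q * x₂ := by rw [← add_mul, hpq, one_mul]
      ext i
      fin_cases i <;> simp [pt]
      exact this.symm
    rw [e] at this
    exact this
  have hmono : MonotoneOn g (Icc (0:ℝ) (15*t/16)) := by
    intro a ha c hc hac
    rcases hac.eq_or_lt with rfl | hlt
    · exact le_rfl
    · exact (hfc.le_slope_of_hasDerivAt ha hc hlt (hf' a ha)).trans
        (hfc.slope_le_of_hasDerivAt ha hc hlt (hf' c hc))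
  have hnn : ∀ s ∈ Icc (t/4) (3*t/4), 0 ≤ hess u (pt s x₂) 0 0 := by
    intro s hs
    have hs' : s ∈ Icc (0:ℝ) (15*t/16) := ⟨by linarith [hs.1], by linarith [hs.2]⟩
    have h1 := (hg' s hs').hasDerivWithinAt (s := Icc (0:ℝ) (15*t/16))
    have h2 := h1.derivWithin (uniqueDiffOn_Icc (by linarith) s hs')
    rw [← h2]
    exact hmono.derivWithin_nonneg
  have hsymm : ∀ x ∈ closedBall (0:E2) t, hess u x 0 1 = hess u x 1 0 := by
    intro x hx
    rw [hhess, hhess]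
    exact ((hC2 x hx).isSymmSndFDerivAt (by simp)).eq _ _
  -- comparison with the axis
  have hcmp : ∀ s ∈ Icc (0:ℝ) (15*t/16), f s ≤ u (pt s 0) + b * |x₂| := by
    intro s hs
    have h := (convex_closedBall (0:E2) t).norm_image_sub_le_of_norm_fderiv_le
      (𝕜 := ℝ) (f := u) (C := b) hd1 (fun x hx => by
        have := hb x hx
        rwa [gradient, LinearIsometryEquiv.norm_map] at this) (hmem0 s hs) (hmem s hs)
    have e : ‖pt s x₂ - pt s 0‖ = |x₂| := by
      rw [EuclideanSpace.norm_eq]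
      simp [pt, Fin.sum_univ_two, Real.sqrt_sq_eq_abs]
    rw [e] at h
    have := (le_abs_self _).trans h
    show u (pt s x₂) ≤ _
    linarith
  have hb0 : 0 ≤ b := (norm_nonneg _).trans (hb 0 (by simp [ht.le]))
  have hbx : 0 ≤ b * |x₂| := mul_nonneg hb0 (abs_nonneg _)
  have m0 : (0:ℝ) ∈ Icc (0:ℝ) (15*t/16) := ⟨by linarith, by linarith⟩
  have m1 : t/4 ∈ Icc (0:ℝ) (15*t/16) := ⟨by linarith, by linarith⟩
  have m3 : 3*t/4 ∈ Icc (0:ℝ) (15*t/16) := ⟨by linarith, by linarith⟩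
  have m4 : 15*t/16 ∈ Icc (0:ℝ) (15*t/16) := ⟨by linarith, by linarith⟩
  have hup : g (3*t/4) * (3*t/16) ≤ m + b * |x₂| := by
    have h := hfc.le_slope_of_hasDerivAt m3 m4 (by linarith) (hf' _ m3)
    rw [slope_def_field, le_div_iff₀ (by linarith)] at h
    have h1 := hcmp _ m4
    have h2 := haxis (15*t/16) ⟨by linarith, by linarith⟩
    have h3 : 0 ≤ f (3*t/4) := hpos _ (hmem _ m3)
    nlinarith
  have hlo : -g (t/4) * (t/4) ≤ b * |x₂| := by
    have h := hfc.slope_le_of_hasDerivAt m0 m1 (by linarith) (hf' _ m1)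
    rw [slope_def_field, div_le_iff₀ (by linarith)] at h
    have h1 := hcmp _ m0
    have h2 : u (pt 0 0) = 0 := by rw [hpt]; simpa using hu0
    have h3 : 0 ≤ f (t/4) := hpos _ (hmem _ m1)
    nlinarith
  have hM : 0 < m + 2 * b * |x₂| := by nlinarith
  have hX : (g (3*t/4) - g (t/4)) * t ≤ 16 * (m + 2 * b * |x₂|) := by nlinarith
  have hcont : ∀ i j, ContinuousOn (fun s => hess u (pt s x₂) i j) (uIcc (t/4) (3*t/4)) := by
    intro i j s hs
    rw [uIcc_of_le (by linarith)] at hs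
    have hs' : s ∈ Icc (0:ℝ) (15*t/16) := ⟨by linarith [hs.1], by linarith [hs.2]⟩
    simp only [hhess]
    have h1 : ContinuousAt (fun s => fderiv ℝ (fderiv ℝ u) (pt s x₂)) s :=
      ContinuousAt.comp (f := fun s => pt s x₂) (hC0 _ (hmem s hs')) (hline s).continuousAt
    exact ((h1.clm_apply continuousAt_const).clm_apply continuousAt_const).continuousWithinAt
  have hi : ∀ i j, IntervalIntegrable (fun s => hess u (pt s x₂) i j) volume (t/4) (3*t/4) :=
    fun i j => (hcont i j).intervalIntegrable
  have hI : ∫ s in (t/4)..(3*t/4), hess u (pt s x₂) 0 0 = g (3*t/4) - g (t/4) := by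
    apply intervalIntegral.integral_eq_sub_of_hasDerivAt _ (hi 0 0)
    intro s hs
    rw [uIcc_of_le (by linarith)] at hs
    exact hg' s ⟨by linarith [hs.1], by linarith [hs.2]⟩
  have hCi : 0 < C₀⁻¹ := inv_pos.2 hC₀
  have hpw : ∀ l : ℝ, ∀ s ∈ Icc (t/4) (3*t/4),
      C₀⁻¹ * (2 * l) - C₀⁻¹ * l^2 * hess u (pt s x₂) 0 0 ≤ hess u (pt s x₂) 1 1 := by
    intro l s hs
    have hs' : s ∈ Icc (0:ℝ) (15*t/16) := ⟨by linarith [hs.1], by linarith [hs.2]⟩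
    have h1 := hdet _ (hmem s hs')
    have h2 := hnn s hs
    rw [detHess, Matrix.det_fin_two, hsymm _ (hmem s hs')] at h1
    generalize hess u (pt s x₂) 0 0 = A at *
    generalize hess u (pt s x₂) 1 1 = B at *
    generalize hess u (pt s x₂) 1 0 = D at *
    have h3 : C₀⁻¹ ≤ A * B := by nlinarith [mul_self_nonneg D]
    have hA : 0 < A := by
      rcases h2.eq_or_lt with h | h
      · rw [← h] at h3; linarith
      · exact h
    have : A * (C₀⁻¹ * (2 * l) - C₀⁻¹ * l^2 * A) ≤ A * B := by
      nlinarith [mul_nonneg hCi.le (sq_nonneg (1 - l * A))]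
    exact le_of_mul_le_mul_left this hA
  have hint : ∀ l : ℝ, C₀⁻¹ * (2 * l) * (t/2) - C₀⁻¹ * l^2 * (g (3*t/4) - g (t/4)) ≤
      ∫ s in (t/4)..(3*t/4), hess u (pt s x₂) 1 1 := by
    intro l
    have h := intervalIntegral.integral_mono_on (μ := volume) (a := t/4) (b := 3*t/4) (by linarith)
      ((intervalIntegrable_const (c := C₀⁻¹ * (2 * l))).sub ((hi 0 0).const_mul (C₀⁻¹ * l^2)))
      (hi 1 1) (hpw l)
    rw [intervalIntegral.integral_sub intervalIntegrable_const ((hi 0 0).const_mul _),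
      intervalIntegral.integral_const, intervalIntegral.integral_const_mul, hI] at h
    refine le_trans (le_of_eq ?_) h
    rw [smul_eq_mul]; ring
  set M := m + 2 * b * |x₂| with hMdef
  refine le_trans ?_ (hint (t^2 / (32 * M)))
  have hX' : g (3*t/4) - g (t/4) ≤ 16 * M / t := by rwa [le_div_iff₀ ht]
  have h5 : C₀⁻¹ * (t^2 / (32 * M))^2 * (g (3*t/4) - g (t/4)) ≤
      C₀⁻¹ * (t^2 / (32 * M))^2 * (16 * M / t) :=
    mul_le_mul_of_nonneg_left hX' (by positivity)
  have h6 : t ^ 3 / (64 * C₀) * M⁻¹ = C₀⁻¹ * (2 * (t^2 / (32 * M))) * (t/2)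
      - C₀⁻¹ * (t^2 / (32 * M))^2 * (16 * M / t) := by
    field_simp
    norm_num
  linarith
end
end
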